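/- There is an absolute constant C > 0 such that the following holds. Let G be an abelian group, let A ⊆ G be a finite set with |A| ≥ 2, and let η ∈ (0,1]. Then there is a finite set L ⊆ G such that Sym_η(A) ⊆ Span(L) and |L| ≤ C·η^{−2}·log|A|. -/

import Mathlib

open Pointwise

/-- The span of a finite set `L`: all sums `∑_{x ∈ L} σ_x • x` with `σ_x ∈ {-1,0,1}`. -/
def Span {G : Type*} [AddCommGroup G] (L : Finset G) : Set G :=
  {y | ∃ σ : G → ℤ, (∀ x, σ x = -1 ∨ σ x = 0 ∨ σ x = 1) ∧ y = ∑ x ∈ L, σ x • x}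

/-- The symmetry set of `A` at threshold `η`: those `x` with `|A ∩ (x + A)| ≥ η|A|`. -/
noncomputable def symmSet {G : Type*} [AddCommGroup G] [DecidableEq G]
    (A : Finset G) (η : ℝ) : Finset G :=
  (A - A).filter fun x => η * A.card ≤ ((A ∩ A.image (x + ·)).card : ℝ)

open MeasureTheory

universe u

theorem AddChar.exists_circle_apply_ne_one {G : Type*} [AddCommGroup G] {x : G} (hx : x ≠ 0) :
    ∃ ψ : AddChar G Circle, ψ x ≠ 1 := by
  obtain ⟨c, hc⟩ := CharacterModule.exists_character_apply_ne_zero_of_ne_zero hx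
  let f : AddCircle (1 : ℚ) →+ AddCircle (1 : ℝ) :=
    QuotientAddGroup.map _ _ (Rat.castHom ℝ).toAddMonoidHom (by
      rintro _ ⟨n, rfl⟩
      exact ⟨n, by simp⟩)
  have hf : Function.Injective f := by
    rw [injective_iff_map_eq_zero]
    intro a
    induction a using QuotientAddGroup.induction_on with
    | H q =>
      intro h
      obtain ⟨n, hn⟩ := (QuotientAddGroup.eq_zero_iff _).1 h
      refine (QuotientAddGroup.eq_zero_iff _).2 ⟨n, ?_⟩
      have h' : (n : ℝ) = (q : ℝ) := by simpa using hn
      have h'' : (n : ℚ) = q := by exact_mod_cast h'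
      simpa using h''
  refine ⟨AddCircle.toCircle_addChar.compAddMonoidHom (f.comp c), fun h ↦ hc (hf ?_)⟩
  apply AddCircle.injective_toCircle one_ne_zero
  rw [map_zero, AddCircle.toCircle_zero]
  exact h

/-- Every abelian group has a uniformly distributed random character. -/
theorem AddChar.exists_uniform_measure (G : Type u) [AddCommGroup G] :
    ∃ (Ω : Type u) (_ : MeasurableSpace Ω) (μ : Measure Ω) (_ : IsProbabilityMeasure μ)
      (ψ : Ω → AddChar G Circle), (∀ x, Measurable fun ω ↦ (ψ ω x : ℂ)) ∧
        ∀ x ≠ 0, ∫ ω, (ψ ω x : ℂ) ∂μ = 0 := by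
  let : TopologicalSpace (Multiplicative G) := ⊥
  have : DiscreteTopology (Multiplicative G) := ⟨rfl⟩
  let K := PontryaginDual (Multiplicative G)
  let : MeasurableSpace K := borel K
  have : BorelSpace K := ⟨rfl⟩
  let μ : Measure K := Measure.haarMeasure ⊤
  have : IsProbabilityMeasure μ := ⟨Measure.haarMeasure_self (K₀ := ⊤)⟩
  refine ⟨K, inferInstance, μ, inferInstance, fun φ ↦
    ⟨fun x ↦ φ (Multiplicative.ofAdd x), map_one φ, fun x y ↦ map_mul φ _ _⟩, fun x ↦ ?_,
    fun x hx ↦ ?_⟩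
  · refine Continuous.measurable ?_
    exact continuous_subtype_val.comp (ContinuousEvalConst.continuous_eval_const
      (F := Multiplicative G →ₜ* Circle) (Multiplicative.ofAdd x))
  · obtain ⟨ψ, hψ⟩ := AddChar.exists_circle_apply_ne_one hx
    let χ : K := (⟨ψ.toMonoidHom, continuous_of_discreteTopology⟩ : Multiplicative G →ₜ* Circle)
    have h := integral_mul_left_eq_self (μ := μ) (fun φ : K ↦ (φ (Multiplicative.ofAdd x) : ℂ)) χ
    have hmul (φ : K) : ((χ * φ) (Multiplicative.ofAdd x) : ℂ) =
        ψ x * φ (Multiplicative.ofAdd x) := rfl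
    simp_rw [hmul, integral_const_mul] at h
    by_contra h0
    exact hψ (Circle.ext ((mul_eq_right₀ h0).1 h))

section RandomCharacter

variable {G Ω : Type*} [AddCommGroup G] [MeasurableSpace Ω] {μ : Measure Ω}
  [IsProbabilityMeasure μ] {ψ : Ω → AddChar G Circle}

theorem integrable_addChar_apply (hm : ∀ x, Measurable fun ω ↦ (ψ ω x : ℂ)) (x : G) :
    Integrable (fun ω ↦ (ψ ω x : ℂ)) μ :=
  .of_bound (hm x).aestronglyMeasurable 1 (.of_forall fun _ ↦ (Circle.norm_coe _).le)

theorem abs_re_circle_le_one (z : Circle) : |(z : ℂ).re| ≤ 1 :=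
  (Complex.abs_re_le_norm _).trans_eq (Circle.norm_coe z)

/-- If `s` is dissociated, then the real parts of a uniform random character on `s` behave like
independent centred variables inside a product of affine functions. -/
theorem AddDissociated.integral_prod_add_mul_re {s : Finset G}
    (hs : AddDissociated (s : Set G)) (hm : ∀ x, Measurable fun ω ↦ (ψ ω x : ℂ))
    (hψ : ∀ x ≠ 0, ∫ ω, (ψ ω x : ℂ) ∂μ = 0) (c d : ℝ) :
    ∫ ω, ∏ x ∈ s, (c + (ψ ω x : ℂ).re * d) ∂μ = c ^ s.card := by
  classical
  apply Complex.ofReal_injective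
  rw [← integral_complex_ofReal]
  have expand (ω : Ω) : ((∏ x ∈ s, (c + (ψ ω x : ℂ).re * d) : ℝ) : ℂ) =
      ∑ t ∈ s.powerset, ∑ u ∈ t.powerset,
        ((d / 2 : ℂ) ^ t.card * c ^ (s \ t).card) *
          (ψ ω (∑ x ∈ u, x - ∑ x ∈ t \ u, x) : ℂ) := by
    have factor (x : G) : ((c + (ψ ω x : ℂ).re * d : ℝ) : ℂ) =
        (d / 2) * (ψ ω x + ψ ω (-x)) + c := by
      rw [AddChar.map_neg_eq_inv, Circle.coe_inv_eq_conj, Complex.add_conj]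
      push_cast
      ring
    have hsum (v : Finset G) : (ψ ω (∑ x ∈ v, x) : ℂ) = ∏ x ∈ v, (ψ ω x : ℂ) :=
      map_prod (Circle.coeHom.comp (ψ ω).toMonoidHom) (fun x ↦ Multiplicative.ofAdd x) v
    simp_rw [AddChar.map_sub_eq_div, Circle.coe_div, hsum, Complex.ofReal_prod, factor,
      Finset.prod_add, Finset.prod_mul_distrib, Finset.prod_const, Finset.prod_add, Finset.mul_sum,
      Finset.sum_mul]
    refine Finset.sum_congr rfl fun t _ ↦ Finset.sum_congr rfl fun u _ ↦ ?_
    simp only [AddChar.map_neg_eq_inv, Circle.coe_inv, Finset.prod_inv_distrib, div_eq_mul_inv]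
    ring
  have hint (x : G) := integrable_addChar_apply (μ := μ) hm x
  simp_rw [expand]
  rw [integral_finsetSum _ fun t _ ↦ integrable_finsetSum _ fun u _ ↦ (hint _).const_mul _,
    Finset.sum_eq_single ∅]
  · simp
  · intro t ht hne
    rw [integral_finsetSum _ fun u _ ↦ (hint _).const_mul _]
    refine Finset.sum_eq_zero fun u hu ↦ ?_
    rw [integral_const_mul, hψ _, mul_zero]
    rw [Finset.mem_powerset] at ht hu
    exact sub_ne_zero.2 <| hs.ne (Finset.coe_subset.2 (hu.trans ht))
      (Finset.coe_subset.2 (Finset.sdiff_subset.trans ht)) (sdiff_ne_right.2 <| .inl hne).symm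
  · simp

/-- The correlation of `A` with its translate by `x`, in terms of a uniform random character. -/
theorem integral_norm_sum_sq_mul_re [DecidableEq G] (hm : ∀ x, Measurable fun ω ↦ (ψ ω x : ℂ))
    (hψ : ∀ x ≠ 0, ∫ ω, (ψ ω x : ℂ) ∂μ = 0) (A : Finset G) (x : G) :
    ∫ ω, ‖∑ a ∈ A, (ψ ω a : ℂ)‖ ^ 2 * (ψ ω x : ℂ).re ∂μ = (A ∩ A.image (x + ·)).card := by
  have hint (x : G) := integrable_addChar_apply (μ := μ) hm x
  have expand (ω : Ω) : ‖∑ a ∈ A, (ψ ω a : ℂ)‖ ^ 2 * (ψ ω x : ℂ).re =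
      (∑ a ∈ A, ∑ b ∈ A, (ψ ω (x + a - b) : ℂ)).re := by
    rw [← Complex.re_ofReal_mul, Complex.ofReal_pow, ← Complex.mul_conj', map_sum,
      Finset.sum_mul_sum, Finset.sum_mul]
    congr 1
    refine Finset.sum_congr rfl fun a _ ↦ ?_
    rw [Finset.sum_mul]
    refine Finset.sum_congr rfl fun b _ ↦ ?_
    rw [AddChar.map_sub_eq_div, AddChar.map_add_eq_mul, Circle.coe_div, Circle.coe_mul,
      ← Circle.coe_inv_eq_conj, Circle.coe_inv, div_eq_mul_inv]
    ring
  have hval (y : G) : ∫ ω, (ψ ω y : ℂ) ∂μ = if y = 0 then 1 else 0 := by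
    split_ifs with hy
    · simp [hy]
    · exact hψ y hy
  have hint' := integrable_finsetSum A fun a _ ↦ integrable_finsetSum A fun b _ ↦ hint (x + a - b)
  simp_rw [expand]
  refine (integral_re hint').trans ?_
  rw [integral_finsetSum _ fun a _ ↦ integrable_finsetSum _ fun b _ ↦ hint _]
  simp_rw [integral_finsetSum _ fun b _ ↦ hint _, hval, sub_eq_zero, Finset.sum_ite_eq]
  have hcard : (A ∩ A.image (x + ·)).card = (A.filter fun a ↦ x + a ∈ A).card := by
    rw [← Finset.card_image_of_injective (A.filter _) (add_right_injective x)]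
    congr 1
    ext y
    simp only [Finset.mem_inter, Finset.mem_image, Finset.mem_filter]
    grind
  rw [hcard, ← Finset.sum_filter]
  simp

/-- Rudin's exponential-moment bound for a dissociated set. -/
theorem AddDissociated.integral_exp_sum_re_le {s : Finset G}
    (hs : AddDissociated (s : Set G)) (hm : ∀ x, Measurable fun ω ↦ (ψ ω x : ℂ))
    (hψ : ∀ x ≠ 0, ∫ ω, (ψ ω x : ℂ) ∂μ = 0) (t : ℝ) :
    ∫ ω, Real.exp (∑ x ∈ s, (ψ ω x : ℂ).re * t) ∂μ ≤ Real.exp (s.card * (t ^ 2 / 2)) := by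
  have hre (x : G) (ω : Ω) : |(ψ ω x : ℂ).re| ≤ 1 := abs_re_circle_le_one _
  have hmre (x : G) : Measurable fun ω ↦ (ψ ω x : ℂ).re := Complex.measurable_re.comp (hm x)
  calc
    _ ≤ ∫ ω, ∏ x ∈ s, (Real.cosh t + (ψ ω x : ℂ).re * Real.sinh t) ∂μ := by
      refine integral_mono_of_nonneg (.of_forall fun ω ↦ (Real.exp_pos _).le) ?_
        (.of_forall fun ω ↦ ?_)
      · refine .of_bound (Measurable.aestronglyMeasurable (by fun_prop))
          (∏ x ∈ s, (Real.cosh t + |Real.sinh t|)) (.of_forall fun ω ↦ ?_)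
        rw [Real.norm_eq_abs, Finset.abs_prod]
        gcongr with x
        refine (abs_add_le _ _).trans ?_
        rw [abs_of_pos (Real.cosh_pos t), abs_mul]
        gcongr
        exact mul_le_of_le_one_left (abs_nonneg _) (hre x ω)
      · simp only [Real.exp_sum]
        gcongr with x
        exact Real.exp_mul_le_cosh_add_mul_sinh (hre x ω) t
    _ = Real.cosh t ^ s.card := hs.integral_prod_add_mul_re hm hψ _ _
    _ ≤ Real.exp (t ^ 2 / 2) ^ s.card := by
      gcongr
      exact Real.cosh_le_exp_half_sq t
    _ = _ := (Real.exp_nat_mul _ _).symm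

end RandomCharacter

/-- A dissociated set of `η`-popular differences of `A` has size `O(η⁻² log |A|)`. -/
theorem AddDissociated.card_le_of_correlation {G : Type*} [AddCommGroup G] [DecidableEq G]
    {A s : Finset G} {η : ℝ} (hs : AddDissociated (s : Set G)) (hA : A.Nonempty) (hη : 0 < η)
    (hsA : ∀ x ∈ s, η * A.card ≤ ((A ∩ A.image (x + ·)).card : ℝ)) :
    (s.card : ℝ) ≤ 2 * η⁻¹ ^ 2 * Real.log A.card := by
  obtain ⟨Ω, _, μ, _, ψ, hm, hψ⟩ := AddChar.exists_uniform_measure G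
  have hApos : (0 : ℝ) < A.card := by exact_mod_cast hA.card_pos
  have hmre (x : G) : Measurable fun ω ↦ (ψ ω x : ℂ).re := Complex.measurable_re.comp (hm x)
  have hre (x : G) (ω : Ω) : |(ψ ω x : ℂ).re| ≤ 1 := abs_re_circle_le_one _
  let F (ω : Ω) : ℝ := ‖∑ a ∈ A, (ψ ω a : ℂ)‖ ^ 2
  let Y (ω : Ω) : ℝ := ∑ x ∈ s, (ψ ω x : ℂ).re * η
  have hF0 (ω : Ω) : 0 ≤ F ω := sq_nonneg _
  have hFle (ω : Ω) : F ω ≤ A.card ^ 2 := by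
    refine pow_le_pow_left₀ (norm_nonneg _) ?_ 2
    exact (norm_sum_le _ _).trans_eq (by simp_rw [Circle.norm_coe]; simp)
  have hYle (ω : Ω) : Y ω ≤ s.card * η := by
    rw [← nsmul_eq_mul]
    refine Finset.sum_le_card_nsmul _ _ _ fun x _ ↦ ?_
    exact mul_le_of_le_one_left hη.le (le_of_abs_le (hre x ω))
  have hFm : Measurable F := by fun_prop
  have hYm : Measurable Y := by fun_prop
  have hFint : Integrable F μ := .of_bound hFm.aestronglyMeasurable (A.card ^ 2)
    (.of_forall fun ω ↦ by rw [Real.norm_of_nonneg (hF0 ω)]; exact hFle ω)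
  have hFreint (x : G) : Integrable (fun ω ↦ F ω * (ψ ω x : ℂ).re) μ :=
    hFint.mul_bdd (hmre x).aestronglyMeasurable (.of_forall fun ω ↦ hre x ω)
  have hexpY : Integrable (fun ω ↦ Real.exp (Y ω)) μ :=
    .of_bound (by fun_prop) (Real.exp (s.card * η)) (.of_forall fun ω ↦ by
      rw [Real.norm_of_nonneg (Real.exp_pos _).le]
      exact Real.exp_le_exp.2 (hYle ω))
  have hFmean : ∫ ω, F ω ∂μ = A.card := by
    simpa [F] using integral_norm_sum_sq_mul_re hm hψ A 0
  have hFYeq (ω : Ω) : F ω * Y ω = ∑ x ∈ s, η * (F ω * (ψ ω x : ℂ).re) := by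
    simp only [Y, Finset.mul_sum]
    exact Finset.sum_congr rfl fun x _ ↦ by ring
  have hFYint : Integrable (fun ω ↦ F ω * Y ω) μ := by
    simp_rw [hFYeq]
    exact integrable_finsetSum _ fun x _ ↦ (hFreint x).const_mul _
  have hFYmean : s.card * η ^ 2 * A.card ≤ ∫ ω, F ω * Y ω ∂μ := by
    simp_rw [hFYeq]
    rw [integral_finsetSum _ fun x _ ↦ (hFreint x).const_mul _, mul_assoc, ← nsmul_eq_mul]
    refine Finset.card_nsmul_le_sum _ _ _ fun x hx ↦ ?_
    rw [integral_const_mul, integral_norm_sum_sq_mul_re hm hψ A x, sq, mul_assoc]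
    exact mul_le_mul_of_nonneg_left (hsA x hx) hη.le
  set m : ℝ := s.card * η ^ 2 with hmdef
  have key : Real.exp m * A.card ≤ A.card ^ 2 * Real.exp (m / 2) := calc
    Real.exp m * A.card ≤ Real.exp m * ((1 - m) * A.card + ∫ ω, F ω * Y ω ∂μ) := by
      gcongr
      linarith
    _ = ∫ ω, Real.exp m * ((1 - m) * F ω + F ω * Y ω) ∂μ := by
      rw [integral_const_mul, integral_add (hFint.const_mul _) hFYint, integral_const_mul, hFmean]
    _ ≤ ∫ ω, A.card ^ 2 * Real.exp (Y ω) ∂μ := by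
      refine integral_mono (((hFint.const_mul _).add hFYint).const_mul _)
        (hexpY.const_mul _) fun ω ↦ ?_
      calc
        _ = F ω * (Real.exp m * (Y ω - m + 1)) := by ring
        _ ≤ F ω * (Real.exp m * Real.exp (Y ω - m)) := by
          gcongr
          exact Real.add_one_le_exp _
        _ = F ω * Real.exp (Y ω) := by rw [← Real.exp_add, add_sub_cancel]
        _ ≤ _ := by
          gcongr
          exact hFle ω
    _ ≤ _ := by
      rw [integral_const_mul, hmdef, mul_div_assoc]
      gcongr
      exact hs.integral_exp_sum_re_le hm hψ η
  have hle : Real.exp (m / 2) ≤ A.card := by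
    have hsplit : Real.exp m = Real.exp (m / 2) * Real.exp (m / 2) := by
      rw [← Real.exp_add, add_halves]
    rw [hsplit] at key
    refine le_of_mul_le_mul_right ?_ (mul_pos (Real.exp_pos (m / 2)) hApos)
    linarith
  have hlog := (Real.le_log_iff_exp_le hApos).2 hle
  calc
    (s.card : ℝ) = 2 * η⁻¹ ^ 2 * (m / 2) := by
      rw [hmdef]
      field_simp
    _ ≤ _ := by gcongr

section Span

variable {G : Type*} [AddCommGroup G] {s t u : Finset G}

theorem subset_Span (s : Finset G) : (s : Set G) ⊆ Span s := by
  classical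
  intro a ha
  refine ⟨Pi.single a 1, fun b ↦ ?_, ?_⟩
  · obtain rfl | hab := eq_or_ne a b <;> simp [*]
  · simp [Pi.single_apply, Finset.mem_coe.1 ha]

theorem sum_sub_sum_mem_Span (ht : t ⊆ s) (hu : u ⊆ s) :
    ∑ a ∈ t, a - ∑ a ∈ u, a ∈ Span s := by
  classical
  refine ⟨fun a ↦ (if a ∈ t then 1 else 0) - if a ∈ u then 1 else 0, fun a ↦ ?_, ?_⟩
  · dsimp only
    split_ifs <;> simp
  · simp [sub_smul, Finset.sum_sub_distrib, ite_smul, Finset.inter_eq_right.2, ht, hu]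

/-- A maximal dissociated subset of `s` spans `s`. -/
theorem exists_addDissociated_subset_Span (s : Finset G) :
    ∃ t ⊆ s, AddDissociated (t : Set G) ∧ (s : Set G) ⊆ Span t := by
  classical
  obtain ⟨t, hmax⟩ :=
    (s.powerset.filter fun t : Finset G ↦ AddDissociated (t : Set G)).exists_maximal
      ⟨∅, by simp⟩
  simp only [Finset.mem_filter, Finset.mem_powerset] at hmax
  refine ⟨t, hmax.1.1, hmax.1.2, fun a ha ↦ ?_⟩
  by_cases hat : a ∈ t
  · exact subset_Span t hat
  obtain ⟨u, v, hu, hv, hdisj, hne, hsum⟩ := not_addDissociated_iff_exists_disjoint.1 fun h ↦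
    hmax.not_gt ⟨Finset.insert_subset_iff.2 ⟨ha, hmax.1.1⟩, h⟩ (Finset.ssubset_insert hat)
  rw [Finset.coe_subset] at hu hv
  have main {u v : Finset G} (hu : u ⊆ insert a t) (hv : v ⊆ insert a t) (hdisj : Disjoint u v)
      (hsum : ∑ x ∈ u, x = ∑ x ∈ v, x) (hau : a ∈ u) : a ∈ Span t := by
    have : a = ∑ x ∈ v, x - ∑ x ∈ u.erase a, x := by
      rw [Finset.sum_erase_eq_sub hau, hsum, sub_sub_cancel]
    rw [this]
    exact sum_sub_sum_mem_Span
      ((Finset.subset_insert_iff_of_notMem <| Finset.disjoint_left.1 hdisj hau).1 hv)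
      (Finset.subset_insert_iff.1 hu)
  by_cases hau : a ∈ u
  · exact main hu hv hdisj hsum hau
  by_cases hav : a ∈ v
  · exact main hv hu hdisj.symm hsum.symm hav
  rw [Finset.subset_insert_iff_of_notMem hau] at hu
  rw [Finset.subset_insert_iff_of_notMem hav] at hv
  exact absurd (hmax.1.2 (Finset.coe_subset.2 hu) (Finset.coe_subset.2 hv) hsum) hne

end Span

theorem chang_for_symmetry_sets :
    ∃ C : ℝ, 0 < C ∧
      ∀ (G : Type) [AddCommGroup G] [DecidableEq G] (A : Finset G) (η : ℝ),
        2 ≤ A.card → 0 < η → η ≤ 1 →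
        ∃ L : Finset G,
          (↑(symmSet A η) : Set G) ⊆ Span L ∧
          (L.card : ℝ) ≤ C * η⁻¹ ^ 2 * Real.log A.card := by
  refine ⟨2, two_pos, fun G _ _ A η hA hη _ ↦ ?_⟩
  obtain ⟨L, hL, hdiss, hspan⟩ := exists_addDissociated_subset_Span (symmSet A η)
  refine ⟨L, hspan, hdiss.card_le_of_correlation (Finset.card_pos.1 (by lia)) hη fun x hx ↦ ?_⟩
  exact (Finset.mem_filter.1 (hL hx)).2
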